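/- Fix an integer r ≥ 0 and a real constant d ≥ 16. The probability that the Erdős–Rényi random graph G(n, d/n) contains an r-shallow topological minor M with |E(M)| > 8 d^{2r+1} |V(M)| tends to 0 as n → ∞. Consequently, asymptotically almost surely every r-shallow topological minor of G(n, d/n) has edge density |E(M)|/|V(M)| at most 8 d^{2r+1}. -/

import Mathlib

/-! The proof is a first-moment computation with an exponential weight.

A shallow topological minor with `k` nails and more than `m = 8 d ^ (2r+1) k` edges yields a nail
set `S` of size `k` and a set `T` of more than `m` paths joining nails, each with at most `2r+1`
edges. Distinct paths share only nails, and nails on a path are its endpoints, so the paths have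
disjoint edge sets (`exists_witness`) and all of them are open with probability equal to the
product of the weights `p ^ length`.

There are at most `k² n ^ (l-1)` candidate paths of length `l`, so with `p = d / n` the total weight
`s` of all candidates is at most `(16/15) d ^ (2r+1) k² / n` (`sum_pathItems_le`). For `y ≥ 1`, the
total weight of all sets `T` with more than `m` elements is at most
`y ^ (-m) ∏ (1 + y w) ≤ y ^ (-m) exp (y s)` (`sum_prod_le_of_lt_card`). Taking `y = e n / k` makes
this at most `exp (-80 k) (k / n) ^ (3 k)` (`prob_nails_le`), which beats the
`choose n k ≤ (e n / k) ^ k` choices of `S` and leaves at most `1 / n²` for each `k`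
(`choose_mul_exp_le`). Summing over `1 ≤ k ≤ n`, a dense minor exists with probability at most
`1 / n` (`prob_dense_le`).
-/

open MeasureTheory Filter
open scoped NNReal ENNReal

/-- The Bernoulli measure on `Bool` with success probability `p`. -/
noncomputable def bernoulliMeasure (p : ℝ≥0) : Measure Bool :=
  p • Measure.dirac true + (1 - p) • Measure.dirac false

/-- The Erdős–Rényi random graph measure: each potential edge (an element of
`Sym2 (Fin n)`) is present independently with probability `p`. -/
noncomputable def erdosRenyi (n : ℕ) (p : ℝ≥0) : Measure (Sym2 (Fin n) → Bool) :=
  Measure.pi fun _ => bernoulliMeasure p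

/-- The simple graph on `Fin n` determined by an edge-indicator function. -/
def graphOf {n : ℕ} (ω : Sym2 (Fin n) → Bool) : SimpleGraph (Fin n) :=
  SimpleGraph.fromEdgeSet {e | ω e = true}

/-- `G` contains `M` as an `r`-shallow topological minor: there is an injection
`φ` of the vertices of `M` (the nails) into `G` and, for each edge of `M`, a path
in `G` of length at most `2r+1` between the corresponding nails, such that these
paths are internally vertex-disjoint: nails appearing on a path are its endpoints,
and any common vertex of the paths of two distinct edges is a nail. -/
def HasShallowTopMinor {n k : ℕ} (G : SimpleGraph (Fin n))
    (M : SimpleGraph (Fin k)) (r : ℕ) : Prop :=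
  ∃ (φ : Fin k ↪ Fin n) (P : ∀ i j, M.Adj i j → G.Walk (φ i) (φ j)),
    (∀ i j (h : M.Adj i j), (P i j h).IsPath ∧ (P i j h).length ≤ 2 * r + 1) ∧
    (∀ i j (h : M.Adj i j) (x : Fin n),
      x ∈ (P i j h).support → x ∈ Set.range φ → x = φ i ∨ x = φ j) ∧
    (∀ i j (h : M.Adj i j) i' j' (h' : M.Adj i' j'), s(i, j) ≠ s(i', j') →
      ∀ x : Fin n, x ∈ (P i j h).support → x ∈ (P i' j' h').support →
        x ∈ Set.range φ)

/-! ### Candidate paths and their weights -/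

/-- A candidate subdivision path with `j + 1` edges on the vertex set `Fin n`, recorded as the
sequence of its `j + 2` vertices. Neither adjacency nor distinctness of the vertices is required. -/
abbrev PathItem (n : ℕ) : Type := Σ j : ℕ, (Fin (j + 2) → Fin n)

/-- The set of vertex pairs traversed by a candidate path. -/
def PathItem.edges {n : ℕ} (t : PathItem n) : Finset (Sym2 (Fin n)) :=
  Finset.univ.image fun i : Fin (t.1 + 1) => s(t.2 i.castSucc, t.2 i.succ)

/-- The candidate paths with at most `2 * r + 1` edges whose two endpoints lie in `S`. -/
def pathItems {n : ℕ} (S : Finset (Fin n)) (r : ℕ) : Finset (PathItem n) :=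
  (Finset.range (2 * r + 1)).sigma fun j =>
    Fintype.piFinset fun i : Fin (j + 2) =>
      if i = 0 ∨ i = Fin.last (j + 1) then S else Finset.univ

theorem sum_pathItems {n : ℕ} (S : Finset (Fin n)) (r : ℕ) (p : ℝ) :
    ∑ t ∈ pathItems S r, p ^ (t.1 + 1)
      = ∑ j ∈ Finset.range (2 * r + 1), (S.card : ℝ) ^ 2 * (n : ℝ) ^ j * p ^ (j + 1) := by
  unfold pathItems
  rw [Finset.sum_sigma]
  refine Finset.sum_congr rfl fun j _ => ?_
  rw [Finset.sum_const (p ^ (j + 1)), nsmul_eq_mul, Fintype.card_piFinset, Fin.prod_univ_succ,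
    Fin.prod_univ_castSucc]
  have h1 : ∀ x : Fin j, ¬ (x.castSucc.succ = 0 ∨ x.castSucc.succ = Fin.last (j + 1)) := by
    intro x
    have := x.2
    simp only [Fin.ext_iff, Fin.val_succ, Fin.val_castSucc, Fin.val_zero, Fin.val_last]
    omega
  have h2 : (Fin.last j).succ = Fin.last (j + 1) := rfl
  simp only [h1, h2, or_true, true_or, if_true, if_false, Finset.prod_const, Finset.card_univ,
    Fintype.card_fin]
  push_cast
  ring

theorem sum_pow_succ_le {d : ℝ} (hd : 16 ≤ d) (m : ℕ) :
    ∑ j ∈ Finset.range m, d ^ (j + 1) ≤ 16 / 15 * d ^ m := by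
  induction m with
  | zero => norm_num
  | succ m ih =>
    rw [Finset.sum_range_succ]
    have : 0 < d ^ m := by positivity
    rw [pow_succ]
    nlinarith

/-- With edge probability `d / n`, the total weight of the candidate paths joining nails of a
`k`-element set is at most `(16/15) d ^ (2r+1) k² / n`. -/
theorem sum_pathItems_le {n : ℕ} (hn : 0 < n) (S : Finset (Fin n)) (r : ℕ) {d : ℝ}
    (hd : 16 ≤ d) :
    ∑ t ∈ pathItems S r, (d / n) ^ (t.1 + 1)
      ≤ 16 / 15 * d ^ (2 * r + 1) * (S.card : ℝ) ^ 2 / n := by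
  have hn' : (0 : ℝ) < n := by exact_mod_cast hn
  rw [sum_pathItems]
  have : ∀ j ∈ Finset.range (2 * r + 1),
      (S.card : ℝ) ^ 2 * (n : ℝ) ^ j * (d / n) ^ (j + 1)
        = (S.card : ℝ) ^ 2 / n * d ^ (j + 1) := by
    intro j _
    rw [div_pow, pow_succ (n : ℝ)]
    field_simp
  rw [Finset.sum_congr rfl this, ← Finset.mul_sum]
  calc _ ≤ (S.card : ℝ) ^ 2 / n * (16 / 15 * d ^ (2 * r + 1)) := by
        gcongr
        exact sum_pow_succ_le hd _
    _ = _ := by ring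

/-! ### From a shallow topological minor to a family of candidate paths -/

/-- The candidate path traversed by a walk. For a walk of length `0` this is a junk value with two
equal vertices. -/
def itemOfWalk {n : ℕ} {G : SimpleGraph (Fin n)} {u v : Fin n} (p : G.Walk u v) : PathItem n :=
  ⟨p.length - 1, fun i => p.getVert i⟩

theorem mem_edges_itemOfWalk {n : ℕ} {G : SimpleGraph (Fin n)} {u v : Fin n} {p : G.Walk u v}
    (hp : 0 < p.length) {e : Sym2 (Fin n)} (he : e ∈ (itemOfWalk p).edges) :
    ∃ x y, e = s(x, y) ∧ G.Adj x y ∧ x ∈ p.support ∧ y ∈ p.support := by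
  obtain ⟨i, -, rfl⟩ := Finset.mem_image.1 he
  have hi : (i : ℕ) < p.length := by
    have : (i : ℕ) < p.length - 1 + 1 := i.2
    omega
  exact ⟨_, _, rfl, p.adj_getVert_succ hi, p.getVert_mem_support _, p.getVert_mem_support _⟩

theorem card_edges_itemOfWalk {n : ℕ} {G : SimpleGraph (Fin n)} {u v : Fin n} {p : G.Walk u v}
    (hp : 0 < p.length) (hpath : p.IsPath) :
    (itemOfWalk p).edges.card = (itemOfWalk p).1 + 1 := by
  unfold PathItem.edges
  rw [Finset.card_image_of_injective]
  · simp
  · intro a b hab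
    have ha : (a : ℕ) < p.length - 1 + 1 := a.2
    have hb : (b : ℕ) < p.length - 1 + 1 := b.2
    have hab' : s(p.getVert a, p.getVert (a + 1)) = s(p.getVert b, p.getVert (b + 1)) := hab
    have inj : ∀ i j : ℕ, i ≤ p.length → j ≤ p.length → p.getVert i = p.getVert j → i = j :=
      fun i j hi hj => hpath.getVert_injOn hi hj
    rcases Sym2.eq_iff.1 hab' with ⟨h1, _⟩ | ⟨h1, h2⟩
    · exact Fin.ext (inj _ _ (by omega) (by omega) h1)
    · have e1 := inj _ _ (by omega) (by omega) h1
      have e2 := inj _ _ (by omega) (by omega) h2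
      omega

theorem itemOfWalk_mem {n : ℕ} {G : SimpleGraph (Fin n)} {u v : Fin n} {p : G.Walk u v}
    (hp : 0 < p.length) {r : ℕ} (hr : p.length ≤ 2 * r + 1) {S : Finset (Fin n)}
    (hu : u ∈ S) (hv : v ∈ S) : itemOfWalk p ∈ pathItems S r := by
  simp only [pathItems, itemOfWalk, Finset.mem_sigma, Finset.mem_range, Fintype.mem_piFinset]
  refine ⟨by omega, fun i => ?_⟩
  split_ifs with h
  · rcases h with rfl | rfl
    · simpa using hu
    · have : p.length - 1 + 1 = p.length := by omega
      simpa [this] using hv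
  · exact Finset.mem_univ _

/-- `T` witnesses in the configuration `ω` a subdivision with nail set `S` and more than `m` edges:
the candidate paths in `T` join nails, traverse pairwise disjoint sets of edges, do not repeat an
edge, and are open in `ω`. -/
structure Witness {n : ℕ} (S : Finset (Fin n)) (r : ℕ) (m : ℝ) (T : Finset (PathItem n)) :
    Prop where
  subset : T ⊆ pathItems S r
  lt_card : m < T.card
  disjoint : (T : Set (PathItem n)).PairwiseDisjoint PathItem.edges
  card_edges : ∀ t ∈ T, t.edges.card = t.1 + 1

theorem exists_witness {n k r : ℕ} {ω : Sym2 (Fin n) → Bool} {M : SimpleGraph (Fin k)}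
    (h : HasShallowTopMinor (graphOf ω) M r) {m : ℝ} (hm : m < M.edgeSet.ncard) :
    ∃ S : Finset (Fin n), S.card = k ∧ ∃ T, Witness S r m T ∧
      ∀ e ∈ T.biUnion PathItem.edges, ω e = true := by
  classical
  obtain ⟨φ, P, hP, hnail, hdisj⟩ := h
  have hpos : ∀ i j (h : M.Adj i j), 0 < (P i j h).length := by
    intro i j h
    rw [Nat.pos_iff_ne_zero]
    intro h0
    exact h.ne (φ.injective (SimpleGraph.Walk.eq_of_length_eq_zero h0))
  have hrep : ∀ e : M.edgeSet, ∃ t, ∃ i j, ∃ h : M.Adj i j, e.1 = s(i, j) ∧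
      t = itemOfWalk (P i j h) := by
    rintro ⟨e, he⟩
    induction e with
    | _ i j => exact ⟨_, i, j, he, rfl, rfl⟩
  choose f hf using hrep
  -- An edge on the path of `ij` with both ends nails must be `φ i φ j`, which determines `ij`.
  have key : ∀ e e' : M.edgeSet, e ≠ e' → Disjoint (f e).edges (f e').edges := by
    intro e e' hne
    obtain ⟨i, j, h, he, ht⟩ := hf e
    obtain ⟨i', j', h', he', ht'⟩ := hf e'
    have hss : s(i, j) ≠ s(i', j') := by
      rw [← he, ← he']; exact fun hh => hne (Subtype.ext hh)
    rw [Finset.disjoint_left]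
    intro a ha ha'
    rw [ht] at ha
    rw [ht'] at ha'
    obtain ⟨x, y, rfl, hxy, hx, hy⟩ := mem_edges_itemOfWalk (hpos _ _ _) ha
    obtain ⟨x', y', hEq, -, hx', hy'⟩ := mem_edges_itemOfWalk (hpos _ _ _) ha'
    have hmem : x ∈ (P i' j' h').support ∧ y ∈ (P i' j' h').support := by
      rcases Sym2.eq_iff.1 hEq with ⟨rfl, rfl⟩ | ⟨rfl, rfl⟩
      · exact ⟨hx', hy'⟩
      · exact ⟨hy', hx'⟩
    have hxr := hdisj _ _ h _ _ h' hss x hx hmem.1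
    have hyr := hdisj _ _ h _ _ h' hss y hy hmem.2
    have h1 := hnail _ _ h x hx hxr
    have h2 := hnail _ _ h y hy hyr
    have h3 := hnail _ _ h' x hmem.1 hxr
    have h4 := hnail _ _ h' y hmem.2 hyr
    have hne := hxy.ne
    have hA : s(x, y) = s(φ i, φ j) := by
      rw [Sym2.eq_iff]; rcases h1 with h1 | h1 <;> rcases h2 with h2 | h2 <;> simp_all
    have hB : s(x, y) = s(φ i', φ j') := by
      rw [Sym2.eq_iff]; rcases h3 with h3 | h3 <;> rcases h4 with h4 | h4 <;> simp_all
    apply hss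
    apply Sym2.map.injective φ.injective
    simpa using hA.symm.trans hB
  have hcard : ∀ e, (f e).edges.card = (f e).1 + 1 := by
    intro e
    obtain ⟨i, j, h, he, ht⟩ := hf e
    rw [ht]
    exact card_edges_itemOfWalk (hpos _ _ _) (hP i j h).1
  have hinj : Function.Injective f := by
    intro e e' hee
    by_contra hne
    have h1 := key e e' hne
    rw [← hee, disjoint_self, Finset.bot_eq_empty, ← Finset.card_eq_zero, hcard] at h1
    omega
  refine ⟨Finset.univ.map φ, by simp, Finset.univ.image f, ⟨?_, ?_, ?_, ?_⟩, ?_⟩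
  · intro t ht
    obtain ⟨e, -, rfl⟩ := Finset.mem_image.1 ht
    obtain ⟨i, j, h, he, ht⟩ := hf e
    rw [ht]
    exact itemOfWalk_mem (hpos _ _ _) (hP i j h).2 (by simp) (by simp)
  · rw [Finset.card_image_of_injective _ hinj]
    rw [← Nat.card_coe_set_eq, Nat.card_eq_fintype_card] at hm
    exact hm
  · intro t ht t' ht' hne
    simp only [Finset.coe_image, Finset.coe_univ, Set.image_univ, Set.mem_range] at ht ht'
    obtain ⟨e, rfl⟩ := ht
    obtain ⟨e', rfl⟩ := ht'
    exact key e e' fun hh => hne (by rw [hh])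
  · intro t ht
    obtain ⟨e, -, rfl⟩ := Finset.mem_image.1 ht
    exact hcard e
  · intro a ha
    simp only [Finset.mem_biUnion, Finset.mem_image, Finset.mem_univ, true_and] at ha
    obtain ⟨_, ⟨e, rfl⟩, ha⟩ := ha
    obtain ⟨i, j, h, he, ht⟩ := hf e
    rw [ht] at ha
    obtain ⟨x, y, rfl, hxy, -, -⟩ := mem_edges_itemOfWalk (hpos _ _ _) ha
    simpa [graphOf] using hxy.1

/-! ### The random graph measure -/

theorem isProbabilityMeasure_bernoulliMeasure {p : ℝ≥0} (hp : p ≤ 1) :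
    IsProbabilityMeasure (bernoulliMeasure p) := by
  constructor
  simp only [bernoulliMeasure, Measure.coe_add, Measure.coe_nnreal_smul_apply, Pi.add_apply,
    measure_univ, mul_one]
  exact_mod_cast add_tsub_cancel_of_le hp

theorem isProbabilityMeasure_erdosRenyi (n : ℕ) {p : ℝ≥0} (hp : p ≤ 1) :
    IsProbabilityMeasure (erdosRenyi n p) := by
  have := isProbabilityMeasure_bernoulliMeasure hp
  unfold erdosRenyi
  infer_instance

theorem erdosRenyi_real_forall_mem (n : ℕ) {p : ℝ≥0} (hp : p ≤ 1) (E : Finset (Sym2 (Fin n))) :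
    (erdosRenyi n p).real {ω | ∀ e ∈ E, ω e = true} = (p : ℝ) ^ E.card := by
  classical
  have := isProbabilityMeasure_bernoulliMeasure hp
  have hset : {ω : Sym2 (Fin n) → Bool | ∀ e ∈ E, ω e = true}
      = Set.pi Set.univ fun e => if e ∈ E then {true} else Set.univ := by
    ext ω
    simp only [Set.mem_ofPred_eq, Set.mem_pi, Set.mem_univ, true_implies]
    refine forall_congr' fun e => ?_
    split_ifs with h <;> simp [h]
  have h1 : bernoulliMeasure p {true} = p := by
    simp [bernoulliMeasure]
  rw [measureReal_def, hset, erdosRenyi, Measure.pi_pi]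
  have : ∀ e, bernoulliMeasure p (if e ∈ E then {true} else Set.univ)
      = if e ∈ E then (p : ℝ≥0∞) else 1 := by
    intro e
    split_ifs
    · exact h1
    · exact measure_univ
  simp only [this, Finset.prod_ite_mem, Finset.univ_inter, Finset.prod_const]
  simp

/-! ### The union bound -/

/-- A Chernoff-type bound for the total weight of large subsets: weighting a set `T` by
`y ^ (#T - m) ≥ 1` turns the sum into a product. -/
theorem sum_prod_le_of_lt_card {ι : Type*} (A : Finset ι) (F : Finset (Finset ι))
    (hF : F ⊆ A.powerset) (w : ι → ℝ) (hw : ∀ t, 0 ≤ w t) {m y : ℝ} (hy : 1 ≤ y)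
    (hm : ∀ T ∈ F, m < (T.card : ℝ)) :
    ∑ T ∈ F, ∏ t ∈ T, w t ≤ y ^ (-m) * Real.exp (y * ∑ t ∈ A, w t) := by
  have hy0 : 0 < y := by linarith
  calc ∑ T ∈ F, ∏ t ∈ T, w t
      ≤ ∑ T ∈ F, y ^ (-m) * ∏ t ∈ T, (y * w t) := by
        refine Finset.sum_le_sum fun T hT => ?_
        rw [Finset.prod_mul_distrib, Finset.prod_const, ← Real.rpow_natCast, ← mul_assoc,
          ← Real.rpow_add hy0]
        refine le_mul_of_one_le_left (Finset.prod_nonneg fun t _ => hw t) ?_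
        exact Real.one_le_rpow hy (by linarith [hm T hT])
    _ ≤ ∑ T ∈ A.powerset, y ^ (-m) * ∏ t ∈ T, (y * w t) := by
        refine Finset.sum_le_sum_of_subset_of_nonneg hF fun T _ _ => ?_
        exact mul_nonneg (Real.rpow_nonneg hy0.le _)
          (Finset.prod_nonneg fun t _ => mul_nonneg hy0.le (hw t))
    _ = y ^ (-m) * ∏ t ∈ A, (1 + y * w t) := by
        rw [← Finset.mul_sum, Finset.prod_one_add]
    _ ≤ _ := by
        gcongr
        rw [Finset.mul_sum, Real.exp_sum]
        refine Finset.prod_le_prod (fun t _ => ?_) fun t _ => ?_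
        · have := mul_nonneg hy0.le (hw t); linarith
        · rw [add_comm]; exact Real.add_one_le_exp _

theorem prob_witness_le {n r : ℕ} {p : ℝ≥0} (hp : p ≤ 1) (S : Finset (Fin n)) {m y : ℝ}
    (hy : 1 ≤ y) :
    (erdosRenyi n p).real
        {ω | ∃ T, Witness S r m T ∧ ∀ e ∈ T.biUnion PathItem.edges, ω e = true}
      ≤ y ^ (-m) * Real.exp (y * ∑ t ∈ pathItems S r, (p : ℝ) ^ (t.1 + 1)) := by
  classical
  have := isProbabilityMeasure_erdosRenyi n hp
  set F := (pathItems S r).powerset.filter fun T => Witness S r m T with hF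
  have hsub : {ω : Sym2 (Fin n) → Bool |
        ∃ T, Witness S r m T ∧ ∀ e ∈ T.biUnion PathItem.edges, ω e = true}
      ⊆ ⋃ T ∈ F, {ω | ∀ e ∈ T.biUnion PathItem.edges, ω e = true} := by
    rintro ω ⟨T, hT, hω⟩
    simp only [Set.mem_iUnion]
    exact ⟨T, by simp [hF, hT, hT.subset], hω⟩
  calc _ ≤ (erdosRenyi n p).real
          (⋃ T ∈ F, {ω | ∀ e ∈ T.biUnion PathItem.edges, ω e = true}) :=
        measureReal_mono hsub (measure_ne_top _ _)
    _ ≤ ∑ T ∈ F, (erdosRenyi n p).real {ω | ∀ e ∈ T.biUnion PathItem.edges, ω e = true} :=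
        measureReal_biUnion_finset_le _ _
    _ = ∑ T ∈ F, ∏ t ∈ T, (p : ℝ) ^ (t.1 + 1) := by
        refine Finset.sum_congr rfl fun T hT => ?_
        have hT := (Finset.mem_filter.1 hT).2
        rw [erdosRenyi_real_forall_mem n hp, Finset.card_biUnion hT.disjoint,
          Finset.sum_congr rfl hT.card_edges, Finset.prod_pow_eq_pow_sum]
    _ ≤ _ := by
        refine sum_prod_le_of_lt_card _ _ (Finset.filter_subset _ _) _
          (fun t => by positivity) hy fun T hT => ?_
        exact (Finset.mem_filter.1 hT).2.lt_card

/-- The choice `y = e * n / k` in `prob_witness_le`. -/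
theorem prob_nails_le {n r : ℕ} {d : ℝ} (hd : 16 ≤ d) (hdn : d ≤ n) (S : Finset (Fin n))
    (hS : 0 < S.card) :
    (erdosRenyi n (d / n).toNNReal).real
        {ω | ∃ T, Witness S r (8 * d ^ (2 * r + 1) * S.card) T ∧
          ∀ e ∈ T.biUnion PathItem.edges, ω e = true}
      ≤ Real.exp (-80 * S.card - 3 * S.card * Real.log (n / S.card)) := by
  have hn : (0 : ℝ) < n := by linarith
  have hk : (0 : ℝ) < S.card := by exact_mod_cast hS
  have hkn : (S.card : ℝ) ≤ n := by
    have := S.card_le_univ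
    rw [Fintype.card_fin] at this
    exact_mod_cast this
  have hL : 0 ≤ Real.log (n / S.card) := Real.log_nonneg ((one_le_div hk).2 hkn)
  have hp : (d / n).toNNReal ≤ 1 := by
    rw [Real.toNNReal_le_one]; exact (div_le_one hn).2 hdn
  have hpc : (((d / n).toNNReal : ℝ≥0) : ℝ) = d / n :=
    Real.coe_toNNReal _ (by positivity)
  set L := Real.log (n / S.card)
  set D := d ^ (2 * r + 1) with hD
  have hD16 : 16 ≤ D := hd.trans (le_self_pow₀ (by linarith) (by omega))
  have hy : (n : ℝ) / S.card = Real.exp L := (Real.exp_log (by positivity)).symm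
  clear_value L D
  refine (prob_witness_le hp S (y := Real.exp (1 + L)) (Real.one_le_exp (by linarith))).trans ?_
  rw [← Real.exp_mul, ← Real.exp_add, Real.exp_le_exp, hpc]
  have hsum := sum_pathItems_le (by exact_mod_cast hn) S r hd
  rw [← hD] at hsum
  have h3 : Real.exp (1 + L) * ∑ t ∈ pathItems S r, (d / n) ^ (t.1 + 1) ≤ 3 * D * S.card := by
    calc _ ≤ Real.exp (1 + L) * (16 / 15 * D * (S.card : ℝ) ^ 2 / n) := by gcongr
      _ = Real.exp 1 * (16 / 15) * (D * S.card) := by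
          rw [Real.exp_add, ← hy]; field_simp
      _ ≤ 3 * (D * S.card) := by
          gcongr
          have := Real.exp_one_lt_d9
          linarith
      _ = _ := by ring
  have h4 : 16 * (S.card : ℝ) ≤ D * S.card := by gcongr
  have h5 : 16 * S.card * L ≤ D * S.card * L := by gcongr
  have h6 : 0 ≤ S.card * L := by positivity
  nlinarith

theorem choose_le_exp {n k : ℕ} (hk : 0 < k) (hkn : k ≤ n) :
    (n.choose k : ℝ) ≤ Real.exp (k + k * Real.log (n / k)) := by
  have hk' : (0 : ℝ) < k := by exact_mod_cast hk
  have hn' : (0 : ℝ) < n := by exact_mod_cast hk.trans_le hkn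
  have h1 : (n.choose k : ℝ) ≤ (n : ℝ) ^ k / k.factorial := Nat.choose_le_pow_div k n
  have h2 : (k : ℝ) ^ k / k.factorial ≤ Real.exp k := Real.pow_div_factorial_le_exp _ hk'.le k
  rw [Real.exp_add, Real.exp_nat_mul, Real.exp_log (by positivity)]
  calc _ ≤ (n : ℝ) ^ k / k.factorial := h1
    _ = (k : ℝ) ^ k / k.factorial * (n / k : ℝ) ^ k := by
        rw [div_pow]; field_simp
    _ ≤ _ := by gcongr

theorem choose_mul_exp_le {n k : ℕ} (hk : 0 < k) (hkn : k ≤ n) :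
    (n.choose k : ℝ) * Real.exp (-80 * k - 3 * k * Real.log (n / k)) ≤ 1 / (n : ℝ) ^ 2 := by
  have hk' : (0 : ℝ) < k := by exact_mod_cast hk
  have hk1 : (1 : ℝ) ≤ k := by exact_mod_cast hk
  have hn' : (0 : ℝ) < n := by exact_mod_cast hk.trans_le hkn
  have hL : 0 ≤ Real.log (n / k) :=
    Real.log_nonneg ((one_le_div hk').2 (by exact_mod_cast hkn))
  have hlk : Real.log k ≤ k := (Real.log_le_sub_one_of_pos hk').trans (by linarith)
  have hr : 1 / (n : ℝ) ^ 2 = Real.exp (-2 * Real.log n) := by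
    rw [mul_comm, Real.exp_mul, Real.exp_log hn', one_div]
    rw [show (-2 : ℝ) = -((2 : ℕ) : ℝ) by norm_num, Real.rpow_neg hn'.le, Real.rpow_natCast]
  rw [hr]
  refine (mul_le_mul_of_nonneg_right (choose_le_exp hk hkn) (Real.exp_pos _).le).trans ?_
  rw [← Real.exp_add, Real.exp_le_exp]
  have h1 : 1 * Real.log (n / k) ≤ k * Real.log (n / k) := by gcongr
  have h2 : Real.log (n / k) = Real.log n - Real.log k :=
    Real.log_div hn'.ne' hk'.ne'
  linarith

theorem prob_dense_le {n : ℕ} (r : ℕ) {d : ℝ} (hd : 16 ≤ d) (hdn : d ≤ n) :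
    (erdosRenyi n (d / n).toNNReal).real
        {ω | ∃ (k : ℕ) (M : SimpleGraph (Fin k)), HasShallowTopMinor (graphOf ω) M r ∧
            8 * d ^ (2 * r + 1) * k < (M.edgeSet.ncard : ℝ)} ≤ 1 / n := by
  classical
  have hn : (0 : ℝ) < n := by linarith
  have hp : (d / n).toNNReal ≤ 1 := by
    rw [Real.toNNReal_le_one]; exact (div_le_one hn).2 hdn
  have := isProbabilityMeasure_erdosRenyi n hp
  set B : Finset (Fin n) → Set (Sym2 (Fin n) → Bool) := fun S =>
    {ω | ∃ T, Witness S r (8 * d ^ (2 * r + 1) * S.card) T ∧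
      ∀ e ∈ T.biUnion PathItem.edges, ω e = true} with hB
  have hsub : {ω : Sym2 (Fin n) → Bool | ∃ (k : ℕ) (M : SimpleGraph (Fin k)),
        HasShallowTopMinor (graphOf ω) M r ∧ 8 * d ^ (2 * r + 1) * k < (M.edgeSet.ncard : ℝ)}
      ⊆ ⋃ k ∈ Finset.Icc 1 n, ⋃ S ∈ Finset.univ.powersetCard k, B S := by
    rintro ω ⟨k, M, hM, hlt⟩
    have hk : k ≠ 0 := by
      rintro rfl
      have : M.edgeSet.ncard = 0 := by
        rw [Set.ncard_eq_zero]
        exact Set.eq_empty_of_isEmpty _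
      simp [this] at hlt
    obtain ⟨S, rfl, T, hT⟩ := exists_witness hM hlt
    have hle : S.card ≤ n := by simpa using S.card_le_univ
    simp only [Set.mem_iUnion]
    exact ⟨S.card, Finset.mem_Icc.2 ⟨Nat.pos_of_ne_zero hk, hle⟩, S,
      Finset.mem_powersetCard.2 ⟨Finset.subset_univ _, rfl⟩, T, hT⟩
  refine (measureReal_mono hsub (measure_ne_top _ _)).trans ((measureReal_biUnion_finset_le _ _).trans ?_)
  calc _ ≤ ∑ _k ∈ Finset.Icc 1 n, 1 / (n : ℝ) ^ 2 := by
        refine Finset.sum_le_sum fun k hk => ?_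
        obtain ⟨hk1, hkn⟩ := Finset.mem_Icc.1 hk
        refine (measureReal_biUnion_finset_le _ _).trans ?_
        refine (Finset.sum_le_card_nsmul _ _
          (Real.exp (-80 * k - 3 * k * Real.log (n / k))) fun S hS => ?_).trans ?_
        · obtain ⟨-, rfl⟩ := Finset.mem_powersetCard.1 hS
          exact prob_nails_le hd hdn S hk1
        · rw [Finset.card_powersetCard, Finset.card_univ, Fintype.card_fin, nsmul_eq_mul]
          exact choose_mul_exp_le hk1 hkn
    _ = 1 / (n : ℝ) := by
        rw [Finset.sum_const, Nat.card_Icc, nsmul_eq_mul]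
        simp only [Nat.add_sub_cancel]
        field_simp

/-! ### The limit -/

/-- For fixed `r ≥ 0` and constant `d ≥ 16`, the probability that `G(n, d/n)`
contains an `r`-shallow topological minor `M` with `|E(M)| > 8 d^(2r+1) |V(M)|`
tends to `0`; consequently a.a.s. every `r`-shallow topological minor of
`G(n, d/n)` has edge density at most `8 d^(2r+1)`. -/
theorem shallow_top_minors_aas_sparse (r : ℕ) (d : ℝ) (hd : 16 ≤ d) :
    Tendsto (fun n : ℕ =>
        erdosRenyi n (Real.toNNReal (d / n))
          {ω | ∃ (k : ℕ) (M : SimpleGraph (Fin k)),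
            HasShallowTopMinor (graphOf ω) M r ∧
            8 * d ^ (2 * r + 1) * k < (M.edgeSet.ncard : ℝ)})
      atTop (nhds 0) ∧
    Tendsto (fun n : ℕ =>
        erdosRenyi n (Real.toNNReal (d / n))
          {ω | ∀ (k : ℕ) (M : SimpleGraph (Fin k)),
            HasShallowTopMinor (graphOf ω) M r →
            (M.edgeSet.ncard : ℝ) ≤ 8 * d ^ (2 * r + 1) * k})
      atTop (nhds 1) := by
  set B : (n : ℕ) → Set (Sym2 (Fin n) → Bool) := fun n =>
    {ω | ∃ (k : ℕ) (M : SimpleGraph (Fin k)), HasShallowTopMinor (graphOf ω) M r ∧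
      8 * d ^ (2 * r + 1) * k < (M.edgeSet.ncard : ℝ)} with hB
  have hlarge : ∀ᶠ n : ℕ in atTop, d ≤ n := tendsto_natCast_atTop_atTop.eventually_ge_atTop d
  have hprob : ∀ n : ℕ, d ≤ n → IsProbabilityMeasure (erdosRenyi n (Real.toNNReal (d / n))) := by
    intro n hn
    refine isProbabilityMeasure_erdosRenyi n ?_
    rw [Real.toNNReal_le_one]
    exact (div_le_one (by linarith)).2 hn
  have h0 : Tendsto (fun n : ℕ => erdosRenyi n (Real.toNNReal (d / n)) (B n)) atTop (nhds 0) := by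
    have hlim : Tendsto (fun n : ℕ => ENNReal.ofReal (1 / (n : ℝ))) atTop (nhds 0) := by
      simpa using ENNReal.tendsto_ofReal tendsto_one_div_atTop_nhds_zero_nat
    refine tendsto_of_tendsto_of_tendsto_of_le_of_le' tendsto_const_nhds hlim
      (Eventually.of_forall fun _ => zero_le) ?_
    filter_upwards [hlarge] with n hn
    have := hprob n hn
    rw [← ofReal_measureReal (measure_ne_top _ _)]
    exact ENNReal.ofReal_le_ofReal (prob_dense_le r hd hn)
  refine ⟨h0, ?_⟩
  have h1 : Tendsto (fun n : ℕ => 1 - erdosRenyi n (Real.toNNReal (d / n)) (B n)) atTop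
      (nhds 1) := by
    simpa using ENNReal.Tendsto.sub tendsto_const_nhds h0 (Or.inl ENNReal.one_ne_top)
  refine h1.congr' ?_
  filter_upwards [hlarge] with n hn
  have := hprob n hn
  rw [← prob_compl_eq_one_sub (Set.toFinite (B n)).measurableSet]
  congr 1
  ext ω
  simp [hB]
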